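/- With Λ' as above, assume ⟨d₁,d₁⟩ is odd. Define I_μ : ℚ⁴ ⊕ ℚ⁸ → ℚ⁴ ⊕ ℚ⁸ by I_μ(x_K, x_E) := (−x_K, x_E); then I_μ(Λ') = Λ'. Let d, δ ∈ Λ' be roots (⟨d,d⟩ = ⟨δ,δ⟩ = −2) with ⟨δ_K,δ_K⟩ < 0. Then {ω ∈ Ω_K : ⟨ω, d_K⟩ = 0} = {ω ∈ Ω_K : ⟨ω, δ_K⟩ = 0} if and only if d ∈ {δ, −δ, I_μ(δ), −I_μ(δ)}. -/

import Mathlib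

/-!
STATEMENT 9: With `Λ'` as in the context and `⟨d₁,d₁⟩` odd, the involution
`I_μ(x_K, x_E) := (−x_K, x_E)` preserves `Λ'`, and for roots `d, δ ∈ Λ'`
with `⟨δ_K,δ_K⟩ < 0` one has
`{ω ∈ Ω_K : ⟨ω,d_K⟩ = 0} = {ω ∈ Ω_K : ⟨ω,δ_K⟩ = 0}` iff
`d ∈ {δ, −δ, I_μ(δ), −I_μ(δ)}`.
-/

noncomputable section
namespace Stmt9

/-- The bilinear form of K = U(2) ⊕ U(2) on ℚ⁴ (ℚ-bilinear extension):
Gram matrix has blocks [[0,2],[2,0]] and [[0,2],[2,0]]. -/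
def bK (x y : Fin 4 → ℚ) : ℚ :=
  2 * (x 0 * y 1 + x 1 * y 0) + 2 * (x 2 * y 3 + x 3 * y 2)

/-- The bilinear form of E = E8(2) on ℚ⁸ (ℚ-bilinear extension):
Gram matrix is −2 times the E8 Cartan matrix. -/
def bE (x y : Fin 8 → ℚ) : ℚ :=
  ∑ i : Fin 8, ∑ j : Fin 8, x i * ((-2 * CartanMatrix.E₈ i j : ℤ) : ℚ) * y j

/-- `x` lies in the lattice ℤ⁴ ⊂ ℚ⁴. -/
def isInt4 (x : Fin 4 → ℚ) : Prop := ∀ i, ∃ n : ℤ, x i = n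

/-- `x` lies in the lattice ℤ⁸ ⊂ ℚ⁸. -/
def isInt8 (x : Fin 8 → ℚ) : Prop := ∀ i, ∃ n : ℤ, x i = n

/-- `x` lies in the dual lattice (1/2)ℤ⁴ ⊂ ℚ⁴ of K. -/
def isHalf4 (x : Fin 4 → ℚ) : Prop := ∀ i, ∃ n : ℤ, x i = n / 2

/-- `x` lies in the dual lattice (1/2)ℤ⁸ ⊂ ℚ⁸ of E. -/
def isHalf8 (x : Fin 8 → ℚ) : Prop := ∀ i, ∃ n : ℤ, x i = n / 2

/-- The ambient space ℚ⁴ ⊕ ℚ⁸ of K ⊕ E. -/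
abbrev V : Type := (Fin 4 → ℚ) × (Fin 8 → ℚ)

/-- The orthogonal direct sum form of K ⊕ E on ℚ⁴ ⊕ ℚ⁸. -/
def bV (x y : V) : ℚ := bK x.1 y.1 + bE x.2 y.2

/-- Membership in the lattice Λ' = ℤ·(d₁,d₂) + (ℤ⁴ ⊕ ℤ⁸) ⊂ ℚ⁴ ⊕ ℚ⁸. -/
def memL (d₁ : Fin 4 → ℚ) (d₂ : Fin 8 → ℚ) (x : V) : Prop :=
  ∃ n : ℤ, isInt4 (x.1 - (n : ℚ) • d₁) ∧ isInt8 (x.2 - (n : ℚ) • d₂)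

/-- The ℂ-bilinear extension of the form of K to ℂ⁴. -/
def bKC (x y : Fin 4 → ℂ) : ℂ :=
  2 * (x 0 * y 1 + x 1 * y 0) + 2 * (x 2 * y 3 + x 3 * y 2)

/-- The period domain Ω_K: ω ∈ ℂ⁴ with ⟨ω,ω⟩ = 0 and ⟨ω,ω̄⟩ a positive real. -/
def OmegaK (ω : Fin 4 → ℂ) : Prop :=
  bKC ω ω = 0 ∧ ∃ t : ℝ, 0 < t ∧ bKC ω (fun i => (starRingEnd ℂ) (ω i)) = (t : ℂ)

/-- Coercion ℚ⁴ → ℂ⁴. -/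
def qc (x : Fin 4 → ℚ) : Fin 4 → ℂ := fun i => ((x i : ℚ) : ℂ)

/-- The involution `I_μ(x_K, x_E) = (−x_K, x_E)`. -/
def Imu (x : V) : V := (-x.1, x.2)

/-!
Since `⟨d₁, d₁⟩` is odd, the `K`-part of every root has odd norm; `E` is negative definite, so that
norm is `-1` as soon as it is nonpositive, and then the `E`-part has norm `-1` too.

*`K`-parts.* A point `u + i v` of `Ω_K` amounts to a positive orthogonal pair `u`, `v` of equal
norm. If `x` has negative norm, then `x^⊥` still contains such a pair, and perturbing it shows that
the pairs in `x^⊥` span `x^⊥`. Hence a vector orthogonal to every period in `x^⊥` is a multiple of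
`x`, and it equals `±x` if it has the same norm.

*`E`-parts.* All roots are congruent modulo `ℤ⁴ ⊕ ℤ⁸`. If `y`, `z` are `E`-parts of norm `-1`, then
`y - z` and `y + z` lie in `E8(2)`, whose nonzero vectors have norm at most `-4`, while their norms
add up to `-4`. If both were nonzero, the sum would be at most `-8`; so `y = ±z`.
-/

section BilinForm

open LinearMap (BilinForm)

variable {F M : Type*} [Field F] [AddCommGroup M] [Module F M]

/-- The projection `v ↦ v - (⟨x, v⟩ / ⟨x, x⟩) x` onto the orthogonal complement of a vector `x`
with `⟨x, x⟩ ≠ 0`. When `⟨x, x⟩ = 0` the quotient is `0` and this is the identity. -/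
def orthogonalPart (B : BilinForm F M) (x : M) : M →ₗ[F] M :=
  LinearMap.id - ((B x x)⁻¹ • B x).smulRight x

lemma orthogonalPart_apply (B : BilinForm F M) (x v : M) :
    orthogonalPart B x v = v - (B x v / B x x) • x := by
  simp [orthogonalPart, div_eq_inv_mul]

lemma apply_orthogonalPart_self (B : BilinForm F M) {x : M} (hx : B x x ≠ 0) (v : M) :
    B x (orthogonalPart B x v) = 0 := by
  simp [orthogonalPart_apply, hx]

lemma apply_orthogonalPart_of_apply_eq_zero {B : BilinForm F M} {x w : M} (h : B w x = 0) (v : M) :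
    B w (orthogonalPart B x v) = B w v := by
  simp [orthogonalPart_apply, h]

lemma eq_smul_of_forall_apply_eq_zero {B : BilinForm F M} (hB : B.IsSymm)
    (hnd : B.Nondegenerate) {x y : M} (hx : B x x ≠ 0) (h : ∀ w, B x w = 0 → B w y = 0) :
    y = (B x y / B x x) • x := by
  rw [← sub_eq_zero, ← orthogonalPart_apply]
  refine hnd.2 _ fun w => ?_
  have hwx : B (orthogonalPart B x w) (orthogonalPart B x y) = 0 := by
    have hx' := apply_orthogonalPart_self B hx w
    rw [apply_orthogonalPart_of_apply_eq_zero (by rwa [hB.eq]), h _ hx']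
  rwa [orthogonalPart_apply B x w, map_sub, map_smul, LinearMap.sub_apply, LinearMap.smul_apply,
    apply_orthogonalPart_self B hx, smul_zero, sub_zero] at hwx

lemma eq_or_eq_neg_of_eq_smul {B : BilinForm F M} {x y : M} {k : F} (hk : y = k • x)
    (hx : B x x ≠ 0) (h : B y y = B x x) : y = x ∨ y = -x := by
  subst hk
  have hk : k * k = 1 := mul_right_cancel₀ hx (by simpa [mul_assoc] using h)
  rcases mul_self_eq_one_iff.1 hk with rfl | rfl <;> simp

variable [LinearOrder F] [IsStrictOrderedRing F]

lemma apply_self_le_apply_orthogonalPart {B : BilinForm F M} (hB : B.IsSymm) {x : M}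
    (hx : B x x < 0) (v : M) :
    B v v ≤ B (orthogonalPart B x v) (orthogonalPart B x v) := by
  have h : B (orthogonalPart B x v) (orthogonalPart B x v) = B v v - B x v ^ 2 / B x x := by
    have hx' := hx.ne
    simp only [orthogonalPart_apply, map_sub, map_smul, LinearMap.sub_apply, LinearMap.smul_apply,
      smul_eq_mul, hB.eq v x]
    field
  have := div_nonpos_of_nonneg_of_nonpos (sq_nonneg (B x v)) hx.le
  linarith

lemma exists_positive_orthogonal_pair_of_neg {B : BilinForm F M} (hB : B.IsSymm) {x p q : M}
    (hx : B x x < 0) (hp : 0 < B p p) (hq : 0 < B q q) (hpq : B p q = 0) :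
    ∃ u v, B x u = 0 ∧ B x v = 0 ∧ 0 < B u u ∧ 0 < B v v ∧ B u v = 0 := by
  have hpos : ∀ {v}, 0 < B v v → 0 < B (orthogonalPart B x v) (orthogonalPart B x v) :=
    fun hv => hv.trans_le (apply_self_le_apply_orthogonalPart hB hx _)
  set u := orthogonalPart B x p
  set c := B u (orthogonalPart B x q) / B u u
  have hqc : 0 < B (q - c • p) (q - c • p) := by
    have : B (q - c • p) (q - c • p) = B q q + c ^ 2 * B p p := by
      simp only [map_sub, map_smul, LinearMap.sub_apply, LinearMap.smul_apply, smul_eq_mul, hpq,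
        hB.eq q p]
      ring
    rw [this]
    positivity
  refine ⟨u, orthogonalPart B x (q - c • p), apply_orthogonalPart_self B hx.ne p,
    apply_orthogonalPart_self B hx.ne _, hpos hp, hpos hqc, ?_⟩
  rw [map_sub, map_smul, ← orthogonalPart_apply, apply_orthogonalPart_self B (hpos hp).ne']

/-- The vectors `u` that occur in a positive orthogonal pair in `W` span `W`: if `n ∈ W` is
orthogonal to such a pair `p`, `q`, then so is `a p + n` for large `a`, still paired with `q`. -/
lemma apply_eq_zero_of_forall_positive_orthogonal_pair {B : BilinForm F M} (hB : B.IsSymm)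
    {W : Submodule F M} {p q : M} (hpW : p ∈ W) (hqW : q ∈ W) (hp : 0 < B p p) (hq : 0 < B q q)
    (hpq : B p q = 0) {f : M →ₗ[F] F}
    (hf : ∀ u ∈ W, ∀ v ∈ W, 0 < B u u → 0 < B v v → B u v = 0 → f u = 0) {w : M} (hw : w ∈ W) :
    f w = 0 := by
  have hqp : B q p = 0 := by rwa [hB.eq]
  have hfp : f p = 0 := hf p hpW q hqW hp hq hpq
  have hfq : f q = 0 := hf q hqW p hpW hq hp hqp
  set n := orthogonalPart B p (orthogonalPart B q w) with hn
  have hnW : n ∈ W := by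
    simp only [hn, orthogonalPart_apply]
    exact W.sub_mem (W.sub_mem hw (W.smul_mem _ hqW)) (W.smul_mem _ hpW)
  have hpn : B p n = 0 := apply_orthogonalPart_self B hp.ne' _
  have hqn : B q n = 0 := by
    rw [hn, apply_orthogonalPart_of_apply_eq_zero hqp, apply_orthogonalPart_self B hq.ne']
  have hfn : f n = f w := by simp [hn, orthogonalPart_apply, hfp, hfq]
  set a := 1 + |B n n| / B p p
  have ha : 0 < B (a • p + n) (a • p + n) := by
    have hself : B (a • p + n) (a • p + n) = a ^ 2 * B p p + B n n := by
      simp only [map_add, map_smul, LinearMap.add_apply, LinearMap.smul_apply, smul_eq_mul, hpn,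
        hB.eq n p]
      ring
    have ha_one : 1 ≤ a := le_add_of_nonneg_right (by positivity)
    have ha_mul : a * B p p = B p p + |B n n| := by simp only [a]; field
    rw [hself]
    calc 0 < a * B p p + B n n := by linarith [neg_abs_le (B n n)]
      _ ≤ a ^ 2 * B p p + B n n := by gcongr; exact le_self_pow₀ ha_one two_ne_zero
  have := hf _ (W.add_mem (W.smul_mem a hpW) hnW) q hqW ha hq (by simp [hpq, hB.eq n q, hqn])
  simpa [hfp, hfn] using this

/-- By the parallelogram law `x - y` and `x + y` cannot both have norm at least `m`. -/
lemma eq_or_eq_neg_of_apply_self_add_lt {B : BilinForm F M} {L : Set M} {m : F}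
    (hm : ∀ v ∈ L, v ≠ 0 → m ≤ B v v) {x y : M} (hsub : x - y ∈ L) (hadd : x + y ∈ L)
    (hlt : B x x + B y y < m) : x = y ∨ x = -y := by
  have parallelogram : B (x - y) (x - y) + B (x + y) (x + y) = 2 * (B x x + B y y) := by
    simp only [map_add, map_sub, LinearMap.add_apply, LinearMap.sub_apply]
    ring
  by_contra! hne
  have := hm _ hsub (sub_ne_zero.2 hne.1)
  have := hm _ hadd (mt eq_neg_of_add_eq_zero_left hne.2)
  linarith

end BilinForm

section Coset

variable {G : Type*} [AddCommGroup G] {L : AddSubgroup G} {d x y : G}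

lemma mem_or_sub_mem_of_sub_zsmul_mem (hd : 2 • d ∈ L) {n : ℤ} (hx : x - n • d ∈ L) :
    x ∈ L ∨ x - d ∈ L := by
  rcases n.even_or_odd' with ⟨k, rfl | rfl⟩
  · left
    convert L.add_mem hx (L.zsmul_mem hd k) using 1
    module
  · right
    convert L.add_mem hx (L.zsmul_mem hd k) using 1
    module

lemma sub_mem_of_sub_mem_of_sub_mem (hx : x - d ∈ L) (hy : y - d ∈ L) : x - y ∈ L := by
  simpa using L.sub_mem hx hy

lemma add_mem_of_sub_mem_of_sub_mem (hd : 2 • d ∈ L) (hx : x - d ∈ L) (hy : y - d ∈ L) :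
    x + y ∈ L := by
  convert L.add_mem (L.add_mem hx hy) hd using 1
  module

end Coset

section IntVectors

variable {ι : Type*}

/-- The lattice `ℤ^ι` of integral vectors in `ℚ^ι`. -/
def intVectors (ι : Type*) : AddSubgroup (ι → ℚ) where
  carrier := {x | ∀ i, ∃ n : ℤ, x i = n}
  zero_mem' _ := ⟨0, by simp⟩
  add_mem' hx hy i := by
    obtain ⟨m, hm⟩ := hx i
    obtain ⟨n, hn⟩ := hy i
    exact ⟨m + n, by simp [hm, hn]⟩
  neg_mem' hx i := by
    obtain ⟨m, hm⟩ := hx i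
    exact ⟨-m, by simp [hm]⟩

lemma exists_intCast_eq_of_mem_intVectors {x : ι → ℚ} (hx : x ∈ intVectors ι) :
    ∃ n : ι → ℤ, x = fun i => (n i : ℚ) := by
  choose n hn using hx
  exact ⟨n, funext hn⟩

lemma two_nsmul_mem_intVectors {x : ι → ℚ} (hx : ∀ i, ∃ n : ℤ, x i = n / 2) :
    2 • x ∈ intVectors ι := by
  intro i
  obtain ⟨n, hn⟩ := hx i
  exact ⟨n, by simp [hn, mul_div_cancel₀]⟩

end IntVectors

section GramForm

variable {ι : Type*} [Fintype ι] [DecidableEq ι]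

/-- The `R`-bilinear extension to `ι → R` of the form on `ι → ℤ` with integral Gram matrix `A`. -/
def gramForm (R : Type*) [CommRing R] (A : Matrix ι ι ℤ) : LinearMap.BilinForm R (ι → R) :=
  Matrix.toBilin' (A.map (Int.cast : ℤ → R))

variable {R S : Type*} [CommRing R] [CommRing S] {A : Matrix ι ι ℤ}

lemma gramForm_apply (A : Matrix ι ι ℤ) (x y : ι → R) :
    gramForm R A x y = ∑ i, ∑ j, x i * A i j * y j := by
  simp [gramForm, Matrix.toBilin'_apply]

lemma gramForm_isSymm (hA : A.IsSymm) : (gramForm R A).IsSymm :=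
  Matrix.isSymm_toBilin'_iff_isSymm.2 (hA.map _)

lemma gramForm_nondegenerate [IsDomain R] [CharZero R] (hA : A.det ≠ 0) :
    (gramForm R A).Nondegenerate := by
  rw [gramForm, Matrix.nondegenerate_toBilin'_iff, Matrix.nondegenerate_iff_det_ne_zero,
    ← Int.cast_det]
  exact_mod_cast hA

lemma gramForm_map (f : R →+* S) (A : Matrix ι ι ℤ) (x y : ι → R) :
    gramForm S A (fun i => f (x i)) (fun i => f (y i)) = f (gramForm R A x y) := by
  simp [gramForm_apply]

lemma even_gramForm_self (hA : A.IsSymm) (hdiag : ∀ i, Even (A i i)) (x : ι → ℤ) :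
    Even (gramForm ℤ A x x) := by
  induction x using Pi.single_induction with
  | zero => simp
  | add x y hx hy =>
    have : gramForm ℤ A (x + y) (x + y) =
        gramForm ℤ A x x + gramForm ℤ A y y + 2 * gramForm ℤ A x y := by
      simp only [map_add, LinearMap.add_apply, (gramForm_isSymm hA).eq y x]
      ring
    rw [this]
    exact (hx.add hy).add (even_two_mul _)
  | single i c =>
    have : gramForm ℤ A (Pi.single i c) (Pi.single i c) = c * A i i * c := by
      simp [gramForm_apply, Pi.single_apply]
    rw [this]
    exact ((hdiag i).mul_left c).mul_right c

lemma exists_gramForm_eq_intCast {x y : ι → ℚ} (A : Matrix ι ι ℤ) (hx : x ∈ intVectors ι)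
    (hy : y ∈ intVectors ι) : ∃ k : ℤ, gramForm ℚ A x y = k := by
  obtain ⟨m, rfl⟩ := exists_intCast_eq_of_mem_intVectors hx
  obtain ⟨n, rfl⟩ := exists_intCast_eq_of_mem_intVectors hy
  exact ⟨_, gramForm_map (Int.castRingHom ℚ) A m n⟩

lemma exists_gramForm_self_eq_two_mul (hA : A.IsSymm) (hdiag : ∀ i, Even (A i i)) {x : ι → ℚ}
    (hx : x ∈ intVectors ι) : ∃ k : ℤ, gramForm ℚ A x x = 2 * k := by
  obtain ⟨n, rfl⟩ := exists_intCast_eq_of_mem_intVectors hx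
  obtain ⟨k, hk⟩ := (even_gramForm_self hA hdiag n).two_dvd
  refine ⟨k, (gramForm_map (Int.castRingHom ℚ) A n n).trans ?_⟩
  simp [hk]

/-- The complex vector `u + i v` with real part `u` and imaginary part `v`. -/
def complexVector (u v : ι → ℝ) : ι → ℂ := fun i => u i + v i * Complex.I

lemma gramForm_complexVector (A : Matrix ι ι ℤ) (u v u' v' : ι → ℝ) :
    gramForm ℂ A (complexVector u v) (complexVector u' v') =
      (gramForm ℝ A u u' - gramForm ℝ A v v' : ℝ) +
        (gramForm ℝ A u v' + gramForm ℝ A v u' : ℝ) * Complex.I := by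
  have hsmul : ∀ u v : ι → ℝ, complexVector u v =
      (fun i => Complex.ofRealHom (u i)) + Complex.I • fun i => Complex.ofRealHom (v i) := by
    intro u v
    ext i
    simp [complexVector, mul_comm]
  simp only [hsmul, map_add, map_smul, LinearMap.add_apply, LinearMap.smul_apply, smul_eq_mul,
    gramForm_map]
  simp only [Complex.ofRealHom_eq_coe, Complex.ofReal_add, Complex.ofReal_sub]
  linear_combination (gramForm ℝ A v v' : ℂ) * Complex.I_sq

end GramForm

section PeriodDomain

/-- The Gram matrix of `U ⊕ U`, so that `K = (U ⊕ U)(2)`. -/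
def hyperbolicGram : Matrix (Fin 4) (Fin 4) ℤ :=
  !![0, 1, 0, 0; 1, 0, 0, 0; 0, 0, 0, 1; 0, 0, 1, 0]

lemma hyperbolicGram_isSymm : hyperbolicGram.IsSymm := by
  unfold Matrix.IsSymm
  decide

lemma bK_eq_two_mul_gramForm (x y : Fin 4 → ℚ) : bK x y = 2 * gramForm ℚ hyperbolicGram x y := by
  simp only [bK, gramForm_apply, hyperbolicGram, Fin.sum_univ_four, Matrix.of_apply,
    Matrix.cons_val', Matrix.cons_val, Int.cast_zero, Int.cast_one]
  ring

lemma bKC_eq_two_mul_gramForm (x y : Fin 4 → ℂ) :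
    bKC x y = 2 * gramForm ℂ hyperbolicGram x y := by
  simp only [bKC, gramForm_apply, hyperbolicGram, Fin.sum_univ_four, Matrix.of_apply,
    Matrix.cons_val', Matrix.cons_val, Int.cast_zero, Int.cast_one]
  ring

lemma OmegaK_complexVector {u v : Fin 4 → ℝ} (hu : 0 < gramForm ℝ hyperbolicGram u u)
    (huv : gramForm ℝ hyperbolicGram u v = 0)
    (hnorm : gramForm ℝ hyperbolicGram v v = gramForm ℝ hyperbolicGram u u) :
    OmegaK (complexVector u v) := by
  have hvu : gramForm ℝ hyperbolicGram v u = 0 := by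
    rwa [(gramForm_isSymm hyperbolicGram_isSymm).eq]
  have hconj : (fun i => starRingEnd ℂ (complexVector u v i)) = complexVector u (-v) := by
    ext i
    simp [complexVector]
  refine ⟨?_, 4 * gramForm ℝ hyperbolicGram u u, by positivity, ?_⟩
  · simp [bKC_eq_two_mul_gramForm, gramForm_complexVector, huv, hvu, hnorm]
  · rw [hconj, bKC_eq_two_mul_gramForm, gramForm_complexVector]
    simp only [map_neg, huv, hvu, hnorm]
    push_cast
    ring

lemma bKC_complexVector_qc_eq_zero_iff (u v : Fin 4 → ℝ) (x : Fin 4 → ℚ) :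
    bKC (complexVector u v) (qc x) = 0 ↔
      gramForm ℝ hyperbolicGram u (fun i => (x i : ℝ)) = 0 ∧
        gramForm ℝ hyperbolicGram v (fun i => (x i : ℝ)) = 0 := by
  have hqc : qc x = complexVector (fun i => (x i : ℝ)) 0 := by
    ext i
    simp [qc, complexVector]
  rw [hqc, bKC_eq_two_mul_gramForm, gramForm_complexVector, Complex.ext_iff]
  simp

lemma gramForm_apply_eq_zero_of_period_orthogonal {x y : Fin 4 → ℚ}
    (h : ∀ ω, OmegaK ω → bKC ω (qc x) = 0 → bKC ω (qc y) = 0) {u v : Fin 4 → ℝ}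
    (hux : gramForm ℝ hyperbolicGram u (fun i => (x i : ℝ)) = 0)
    (hvx : gramForm ℝ hyperbolicGram v (fun i => (x i : ℝ)) = 0)
    (hu : 0 < gramForm ℝ hyperbolicGram u u) (hv : 0 < gramForm ℝ hyperbolicGram v v)
    (huv : gramForm ℝ hyperbolicGram u v = 0) :
    gramForm ℝ hyperbolicGram u (fun i => (y i : ℝ)) = 0 := by
  set c := √(gramForm ℝ hyperbolicGram u u / gramForm ℝ hyperbolicGram v v)
  have hc : c ^ 2 = gramForm ℝ hyperbolicGram u u / gramForm ℝ hyperbolicGram v v :=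
    Real.sq_sqrt (by positivity)
  have hnorm : gramForm ℝ hyperbolicGram (c • v) (c • v) = gramForm ℝ hyperbolicGram u u := by
    simp only [map_smul, LinearMap.smul_apply, smul_eq_mul]
    rw [← mul_assoc, ← sq, hc, div_mul_cancel₀ _ hv.ne']
  have hω : OmegaK (complexVector u (c • v)) := OmegaK_complexVector hu (by simp [huv]) hnorm
  have hωx := (bKC_complexVector_qc_eq_zero_iff u (c • v) x).2 ⟨hux, by simp [hvx]⟩
  exact ((bKC_complexVector_qc_eq_zero_iff _ _ y).1 (h _ hω hωx)).1

lemma exists_eq_smul_of_period_orthogonal {x y : Fin 4 → ℚ} (hx : bK x x < 0)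
    (h : ∀ ω, OmegaK ω → bKC ω (qc x) = 0 → bKC ω (qc y) = 0) : ∃ k : ℚ, y = k • x := by
  have hcast : ∀ z w : Fin 4 → ℚ,
      gramForm ℝ hyperbolicGram (fun i => (z i : ℝ)) (fun i => (w i : ℝ)) =
        (gramForm ℚ hyperbolicGram z w : ℚ) :=
    gramForm_map (Rat.castHom ℝ) hyperbolicGram
  have hsymm := gramForm_isSymm (R := ℝ) hyperbolicGram_isSymm
  have hneg : gramForm ℝ hyperbolicGram (fun i => (x i : ℝ)) (fun i => (x i : ℝ)) < 0 := by
    rw [bK_eq_two_mul_gramForm] at hx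
    rw [hcast]
    exact_mod_cast (by linarith : gramForm ℚ hyperbolicGram x x < 0)
  obtain ⟨p, q, hxp, hxq, hp, hq, hpq⟩ := exists_positive_orthogonal_pair_of_neg hsymm hneg
    (p := ![1, 1, 0, 0]) (q := ![0, 0, 1, 1])
    (by simp [gramForm_apply, hyperbolicGram, Fin.sum_univ_four])
    (by simp [gramForm_apply, hyperbolicGram, Fin.sum_univ_four])
    (by simp [gramForm_apply, hyperbolicGram, Fin.sum_univ_four])
  have hperp : ∀ w, gramForm ℝ hyperbolicGram (fun i => (x i : ℝ)) w = 0 →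
      gramForm ℝ hyperbolicGram w (fun i => (y i : ℝ)) = 0 := by
    intro w hw
    refine apply_eq_zero_of_forall_positive_orthogonal_pair hsymm
      (W := LinearMap.ker (gramForm ℝ hyperbolicGram fun i => (x i : ℝ)))
      (f := (gramForm ℝ hyperbolicGram).flip fun i => (y i : ℝ))
      hxp hxq hp hq hpq (fun u hu v hv hupos hvpos huv => ?_) hw
    exact gramForm_apply_eq_zero_of_period_orthogonal h
      ((hsymm.eq _ _).trans hu) ((hsymm.eq _ _).trans hv) hupos hvpos huv
  have hdet : hyperbolicGram.det ≠ 0 := by decide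
  have hy := eq_smul_of_forall_apply_eq_zero hsymm (gramForm_nondegenerate hdet) hneg.ne hperp
  refine ⟨gramForm ℚ hyperbolicGram x y / gramForm ℚ hyperbolicGram x x, funext fun i => ?_⟩
  have hyi := congrFun hy i
  simp only [hcast, Pi.smul_apply, smul_eq_mul] at hyi ⊢
  exact_mod_cast hyi

end PeriodDomain

section E8

lemma bE_eq_neg_two_mul_gramForm (x y : Fin 8 → ℚ) :
    bE x y = -2 * gramForm ℚ CartanMatrix.E₈ x y := by
  simp only [bE, gramForm_apply, Finset.mul_sum]
  refine Finset.sum_congr rfl fun i _ => Finset.sum_congr rfl fun j _ => ?_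
  push_cast
  ring

/-- Completing the square along the Dynkin diagram, from its leaves towards the branch node `3`:
`![2, 3, 3, 3, 3, 4, 5, 6] i` is the neighbour of `i` on the path to that node. -/
lemma gramForm_E₈_self {F : Type*} [Field F] [CharZero F] (x : Fin 8 → F) :
    gramForm F CartanMatrix.E₈ x x =
      ∑ i, ![2, 2, 3 / 2, 1 / 30, 5 / 4, 4 / 3, 3 / 2, 2] i *
        (x i - ![1 / 2, 1 / 2, 2 / 3, 0, 4 / 5, 3 / 4, 2 / 3, 1 / 2] i *
          x (![2, 3, 3, 3, 3, 4, 5, 6] i)) ^ 2 := by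
  simp only [gramForm_apply, CartanMatrix.E₈, Fin.sum_univ_eight, Matrix.of_apply,
    Matrix.cons_val', Matrix.cons_val, Int.cast_zero, Int.cast_one, Int.cast_neg, Int.cast_ofNat]
  field

lemma gramForm_E₈_self_pos {F : Type*} [Field F] [LinearOrder F] [IsStrictOrderedRing F]
    {x : Fin 8 → F} (hx : x ≠ 0) : 0 < gramForm F CartanMatrix.E₈ x x := by
  have hweight : ∀ i, (0 : F) < ![2, 2, 3 / 2, 1 / 30, 5 / 4, 4 / 3, 3 / 2, 2] i := by
    intro i
    fin_cases i <;> simp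
  have hterm := fun i (z : F) => mul_nonneg (hweight i).le (sq_nonneg z)
  rw [gramForm_E₈_self]
  refine (Finset.sum_nonneg fun i _ => hterm i _).lt_of_ne' fun hsum => hx ?_
  have hzero := fun i => sub_eq_zero.1 <| pow_eq_zero_iff two_ne_zero |>.1 <|
    (mul_eq_zero.1 <| (Finset.sum_eq_zero_iff_of_nonneg fun i _ => hterm i _).1 hsum i
      (Finset.mem_univ i)).resolve_left (hweight i).ne'
  have h3 : x 3 = 0 := by simpa using hzero 3
  have h4 : x 4 = 0 := by simpa [h3] using hzero 4
  have h5 : x 5 = 0 := by simpa [h4] using hzero 5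
  have h6 : x 6 = 0 := by simpa [h5] using hzero 6
  have h2 : x 2 = 0 := by simpa [h3] using hzero 2
  ext i
  fin_cases i
  · simpa [h2] using hzero 0
  · simpa [h3] using hzero 1
  · exact h2
  · exact h3
  · exact h4
  · exact h5
  · exact h6
  · simpa [h6] using hzero 7

lemma exists_gramForm_E₈_self_eq_two_mul {x : Fin 8 → ℚ} (hx : x ∈ intVectors (Fin 8)) :
    ∃ k : ℤ, gramForm ℚ CartanMatrix.E₈ x x = 2 * k :=
  exists_gramForm_self_eq_two_mul CartanMatrix.E₈_isSymm (by simp) hx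

lemma two_le_gramForm_E₈_self {x : Fin 8 → ℚ} (hx : x ∈ intVectors (Fin 8)) (hne : x ≠ 0) :
    2 ≤ gramForm ℚ CartanMatrix.E₈ x x := by
  obtain ⟨k, hk⟩ := exists_gramForm_E₈_self_eq_two_mul hx
  have hpos := gramForm_E₈_self_pos hne
  rw [hk] at hpos ⊢
  have : 1 ≤ k := by
    have : 0 < k := by exact_mod_cast pos_of_mul_pos_right hpos zero_le_two
    omega
  exact_mod_cast (by omega : 2 ≤ 2 * k)

end E8

section Roots

variable {d₁ : Fin 4 → ℚ} {d₂ : Fin 8 → ℚ}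

/-- The lattice `ℤ⁴ ⊕ ℤ⁸` of `K ⊕ E`, an index-two sublattice of `Λ'`. -/
def intLattice : AddSubgroup V := (intVectors (Fin 4)).prod (intVectors (Fin 8))

lemma two_nsmul_mem_intLattice (hd₁ : isHalf4 d₁) (hd₂ : isHalf8 d₂) :
    2 • (d₁, d₂) ∈ intLattice :=
  ⟨two_nsmul_mem_intVectors hd₁, two_nsmul_mem_intVectors hd₂⟩

lemma memL_iff {x : V} : memL d₁ d₂ x ↔ ∃ n : ℤ, x - n • (d₁, d₂) ∈ intLattice := by
  simp only [memL, Int.cast_smul_eq_zsmul]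
  rfl

lemma memL_Imu (hd₁ : isHalf4 d₁) {x : V} (hx : memL d₁ d₂ x) : memL d₁ d₂ (Imu x) := by
  obtain ⟨n, hn⟩ := memL_iff.1 hx
  have hK : x.1 - n • d₁ ∈ intVectors (Fin 4) := hn.1
  have heq : (Imu x - n • (d₁, d₂)).1 = -(x.1 - n • d₁) - n • 2 • d₁ := by
    simp only [Imu, Prod.fst_sub, Prod.smul_fst]
    module
  refine memL_iff.2 ⟨n, ?_, hn.2⟩
  change (Imu x - n • (d₁, d₂)).1 ∈ intVectors (Fin 4)
  rw [heq]
  exact sub_mem (neg_mem hK) (zsmul_mem (two_nsmul_mem_intVectors hd₁) n)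

lemma image_Imu_setOf_memL (hd₁ : isHalf4 d₁) :
    Imu '' {x : V | memL d₁ d₂ x} = {x : V | memL d₁ d₂ x} := by
  have hinv : Function.Involutive Imu := fun x => by simp [Imu]
  rw [hinv.image_eq_preimage_symm]
  ext x
  exact ⟨fun hx => hinv x ▸ memL_Imu hd₁ hx, memL_Imu hd₁⟩

lemma exists_bK_self_eq_four_mul {x : Fin 4 → ℚ} (hx : x ∈ intVectors (Fin 4)) :
    ∃ k : ℤ, bK x x = 4 * k := by
  obtain ⟨k, hk⟩ := exists_gramForm_self_eq_two_mul hyperbolicGram_isSymm (by decide) hx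
  exact ⟨k, by rw [bK_eq_two_mul_gramForm, hk]; ring⟩

lemma exists_bE_self_eq_four_mul {x : Fin 8 → ℚ} (hx : x ∈ intVectors (Fin 8)) :
    ∃ k : ℤ, bE x x = 4 * k := by
  obtain ⟨k, hk⟩ := exists_gramForm_E₈_self_eq_two_mul hx
  exact ⟨-k, by rw [bE_eq_neg_two_mul_gramForm, hk]; push_cast; ring⟩

lemma bE_self_nonpos (x : Fin 8 → ℚ) : bE x x ≤ 0 := by
  rw [bE_eq_neg_two_mul_gramForm]
  rcases eq_or_ne x 0 with rfl | hx
  · simp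
  · linarith [gramForm_E₈_self_pos hx]

lemma not_mem_intLattice_of_root {x : V} (hx : bV x x = -2) : x ∉ intLattice := by
  rintro ⟨hK, hE⟩
  obtain ⟨k, hk⟩ := exists_bK_self_eq_four_mul hK
  obtain ⟨l, hl⟩ := exists_bE_self_eq_four_mul hE
  rw [bV, hk, hl] at hx
  have : 4 * k + 4 * l = -2 := by exact_mod_cast hx
  omega

lemma sub_mem_intLattice_of_root (hd₁ : isHalf4 d₁) (hd₂ : isHalf8 d₂) {x : V}
    (hxL : memL d₁ d₂ x) (hx : bV x x = -2) : x - (d₁, d₂) ∈ intLattice := by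
  obtain ⟨n, hn⟩ := memL_iff.1 hxL
  exact (mem_or_sub_mem_of_sub_zsmul_mem (two_nsmul_mem_intLattice hd₁ hd₂) hn).resolve_left
    (not_mem_intLattice_of_root hx)

lemma exists_bK_self_eq_add_two_mul (hd₁ : isHalf4 d₁) {x : Fin 4 → ℚ}
    (hx : x - d₁ ∈ intVectors (Fin 4)) : ∃ k : ℤ, bK x x = bK d₁ d₁ + 2 * k := by
  obtain ⟨k, hk⟩ := exists_gramForm_eq_intCast hyperbolicGram hx
    (add_mem hx (two_nsmul_mem_intVectors hd₁))
  refine ⟨k, ?_⟩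
  rw [bK_eq_two_mul_gramForm, bK_eq_two_mul_gramForm, ← hk]
  simp only [map_add, map_sub, LinearMap.sub_apply, two_nsmul,
    (gramForm_isSymm hyperbolicGram_isSymm).eq d₁ x]
  ring

lemma bK_self_eq_neg_one_of_root (hd₁ : isHalf4 d₁) (hd₂ : isHalf8 d₂)
    (hodd : ∃ m : ℤ, bK d₁ d₁ = 2 * m + 1) {x : V} (hxL : memL d₁ d₂ x) (hx : bV x x = -2)
    (hneg : bK x.1 x.1 ≤ 0) : bK x.1 x.1 = -1 := by
  obtain ⟨m, hm⟩ := hodd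
  obtain ⟨k, hk⟩ :=
    exists_bK_self_eq_add_two_mul hd₁ (sub_mem_intLattice_of_root hd₁ hd₂ hxL hx).1
  have hlower : -2 ≤ bK x.1 x.1 := by
    rw [bV] at hx
    linarith [bE_self_nonpos x.2]
  have hint : bK x.1 x.1 = (2 * (m + k) + 1 : ℤ) := by
    rw [hk, hm]
    push_cast
    ring
  rw [hint] at hlower hneg ⊢
  norm_cast at hlower hneg ⊢
  omega

lemma snd_eq_or_eq_neg_of_roots (hd₁ : isHalf4 d₁) (hd₂ : isHalf8 d₂) {x y : V}
    (hxL : memL d₁ d₂ x) (hx : bV x x = -2) (hyL : memL d₁ d₂ y) (hy : bV y y = -2)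
    (hxK : bK x.1 x.1 = -1) (hyK : bK y.1 y.1 = -1) : x.2 = y.2 ∨ x.2 = -y.2 := by
  have hxd := (sub_mem_intLattice_of_root hd₁ hd₂ hxL hx).2
  have hyd := (sub_mem_intLattice_of_root hd₁ hd₂ hyL hy).2
  rw [bV, hxK, bE_eq_neg_two_mul_gramForm] at hx
  rw [bV, hyK, bE_eq_neg_two_mul_gramForm] at hy
  exact eq_or_eq_neg_of_apply_self_add_lt (L := intVectors (Fin 8))
    (fun _ => two_le_gramForm_E₈_self) (sub_mem_of_sub_mem_of_sub_mem hxd hyd)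
    (add_mem_of_sub_mem_of_sub_mem (two_nsmul_mem_intVectors hd₂) hxd hyd) (by linarith)

lemma fst_eq_or_eq_neg_of_period_orthogonal (hd₁ : isHalf4 d₁) (hd₂ : isHalf8 d₂)
    (hodd : ∃ m : ℤ, bK d₁ d₁ = 2 * m + 1) {x y : V} (hxL : memL d₁ d₂ x) (hx : bV x x = -2)
    (hyK : bK y.1 y.1 = -1)
    (h : ∀ ω, OmegaK ω → bKC ω (qc y.1) = 0 → bKC ω (qc x.1) = 0) :
    x.1 = y.1 ∨ x.1 = -y.1 := by
  obtain ⟨k, hk⟩ := exists_eq_smul_of_period_orthogonal (by linarith) h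
  have hxK : bK x.1 x.1 = -1 := by
    refine bK_self_eq_neg_one_of_root hd₁ hd₂ hodd hxL hx ?_
    have : bK x.1 x.1 = k ^ 2 * bK y.1 y.1 := by
      simp only [hk, bK_eq_two_mul_gramForm, map_smul, LinearMap.smul_apply, smul_eq_mul]
      ring
    nlinarith [sq_nonneg k]
  rw [bK_eq_two_mul_gramForm] at hxK hyK
  exact eq_or_eq_neg_of_eq_smul (B := gramForm ℚ hyperbolicGram) hk (by linarith) (by linarith)

lemma eq_or_eq_neg_or_eq_Imu_iff {x y : V} :
    (x = y ∨ x = -y ∨ x = Imu y ∨ x = -Imu y) ↔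
      (x.1 = y.1 ∨ x.1 = -y.1) ∧ (x.2 = y.2 ∨ x.2 = -y.2) := by
  simp only [Prod.ext_iff, Imu, Prod.fst_neg, Prod.snd_neg, neg_neg]
  tauto

lemma bK_self_of_eq_or_eq_neg {x y : Fin 4 → ℚ} (h : x = y ∨ x = -y) : bK x x = bK y y := by
  rcases h with rfl | rfl
  · rfl
  · simp [bK]

lemma bKC_qc_eq_zero_iff_of_eq_or_eq_neg {x y : Fin 4 → ℚ} (h : x = y ∨ x = -y) (ω : Fin 4 → ℂ) :
    bKC ω (qc x) = 0 ↔ bKC ω (qc y) = 0 := by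
  rcases h with rfl | rfl
  · rfl
  · have : qc (-y) = -qc y := by ext i; simp [qc]
    simp [this, bKC_eq_two_mul_gramForm]

end Roots

theorem statement9 (d₁ : Fin 4 → ℚ) (d₂ : Fin 8 → ℚ)
    (hd₁ : isHalf4 d₁) (hd₁' : ¬ isInt4 d₁)
    (hd₂ : isHalf8 d₂) (hd₂' : ¬ isInt8 d₂)
    (heven : ∃ k : ℤ, bK d₁ d₁ + bE d₂ d₂ = 2 * k)
    (hodd : ∃ m : ℤ, bK d₁ d₁ = 2 * m + 1) :
    Imu '' {x : V | memL d₁ d₂ x} = {x : V | memL d₁ d₂ x} ∧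
    ∀ d δ : V, memL d₁ d₂ d → bV d d = -2 → memL d₁ d₂ δ → bV δ δ = -2 →
      bK δ.1 δ.1 < 0 →
      ({ω : Fin 4 → ℂ | OmegaK ω ∧ bKC ω (qc d.1) = 0}
          = {ω : Fin 4 → ℂ | OmegaK ω ∧ bKC ω (qc δ.1) = 0} ↔
        (d = δ ∨ d = -δ ∨ d = Imu δ ∨ d = -Imu δ)) := by
  refine ⟨image_Imu_setOf_memL hd₁, fun d δ hd hd_root hδ hδ_root hneg => ?_⟩
  have hδK := bK_self_eq_neg_one_of_root hd₁ hd₂ hodd hδ hδ_root hneg.le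
  rw [eq_or_eq_neg_or_eq_Imu_iff]
  constructor
  · intro hset
    have hfst := fst_eq_or_eq_neg_of_period_orthogonal hd₁ hd₂ hodd hd hd_root hδK
      fun ω hω hωδ => (hset.ge ⟨hω, hωδ⟩).2
    have hdK := (bK_self_of_eq_or_eq_neg hfst).trans hδK
    exact ⟨hfst, snd_eq_or_eq_neg_of_roots hd₁ hd₂ hd hd_root hδ hδ_root hdK hδK⟩
  · rintro ⟨hfst, -⟩
    simp only [bKC_qc_eq_zero_iff_of_eq_or_eq_neg hfst]

end Stmt9
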